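/- Let d ≥ 2 be an even integer and n = d + 2. Then the set Σ = {(α, λ) ∈ ℂ^{d−1} × ℂ : there exists a nonzero solution of the Schrödinger equation with parameters (α, λ) that is subdominant in each of the n/2 sectors S₀, S₂, S₄, …, S_{n−2}} is disconnected, i.e., Σ is not a preconnected subset of ℂ^{d−1} × ℂ. -/

import Mathlib

open Complex Filter Topology

/-- The polynomial potential `P_α(z) = z^d + α_{d-1} z^{d-1} + ⋯ + α₁ z`. -/
noncomputable def Pol (d : ℕ) (α : Fin (d - 1) → ℂ) (z : ℂ) : ℂ :=
  z ^ d + ∑ i : Fin (d - 1), α i * z ^ ((i : ℕ) + 1)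

/-- `y` is an (entire) solution of the Schrödinger equation `y'' = (P_α - λ) y`. -/
def IsSol (d : ℕ) (α : Fin (d - 1) → ℂ) (lam : ℂ) (y : ℂ → ℂ) : Prop :=
  Differentiable ℂ y ∧ ∀ z : ℂ, deriv (deriv y) z = (Pol d α z - lam) * y z

/-- `θ` is a ray direction of the Stokes sector `S_j`. -/
def DirIn (n j : ℕ) (θ : ℝ) : Prop :=
  |θ - 2 * Real.pi * j / n| < Real.pi / n

/-- `y` is subdominant in the Stokes sector `S_j`: it tends to `0` along every ray in `S_j`. -/
def Subdominant (n j : ℕ) (y : ℂ → ℂ) : Prop :=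
  ∀ θ : ℝ, DirIn n j θ →
    Tendsto (fun r : ℝ => y ((r : ℂ) * Complex.exp (θ * Complex.I))) atTop (𝓝 0)

/-!
Write `d = 2 (k + 1)` and `P_α - λ = q² + r` with `q` monic of degree `k + 1` and `deg r ≤ k`, and
let `ρ (α, λ)` be the coefficient of `z ^ k` in `r`, which depends continuously on `(α, λ)`.

Let `y ≠ 0` be a solution decaying in the sectors `S₀, S₂, …`, and let `R' = q`. Then
`u = y * exp R` is entire of finite order and satisfies `u'' = 2 q u' + (r + q') u`. In the even
sectors `y` is the recessive solution, comparable to `exp (-R)`, and in the other ones `exp (-R)` is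
dominant; either way `u` grows at most polynomially on enough rays for Phragmén–Lindelöf to make it
a polynomial. Comparing leading coefficients in its equation gives
`ρ (α, λ) = -(k + 1) - 2 deg u`.

So `ρ` takes values in a discrete set on `Σ`, and it takes the two values `-(k + 1)` and `-(k + 3)`,
at the potentials of `z ^ j * exp (-z ^ (k + 2) / (k + 2))` for `j = 0, 1`.
-/

section HalfLine

open Asymptotics

theorem mul_natCast_mul_pow_sub_one (n : ℕ) (t : ℝ) : t * (n * t ^ (n - 1)) = n * t ^ n := by
  rcases n with _ | n
  · simp
  · rw [Nat.add_sub_cancel]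
    ring

theorem antitoneOn_div_pow {f f' : ℝ → ℝ} {a : ℝ} {N : ℕ} (ha : 0 < a)
    (hf : ∀ t ∈ Set.Ici a, HasDerivAt f (f' t) t) (h : ∀ t ∈ Set.Ici a, t * f' t ≤ N * f t) :
    AntitoneOn (fun t => f t / t ^ N) (Set.Ici a) := by
  have hpos : ∀ t ∈ Set.Ici a, 0 < t := fun t ht => ha.trans_le ht
  have hd : ∀ t ∈ Set.Ici a, HasDerivAt (fun t => f t / t ^ N)
      ((t * f' t - N * f t) / t ^ (N + 1)) t := fun t ht => by
    have ht0 := (hpos t ht).ne'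
    refine ((hf t ht).div (hasDerivAt_pow N t) (pow_ne_zero N ht0)).congr_deriv ?_
    rw [div_eq_div_iff (by positivity) (by positivity)]
    linear_combination -(f t * t ^ N) * mul_natCast_mul_pow_sub_one N t
  refine antitoneOn_of_hasDerivWithinAt_nonpos (convex_Ici a)
    (fun t ht => (hd t ht).continuousAt.continuousWithinAt)
    (fun t ht => (hd t (interior_subset ht)).hasDerivWithinAt) fun t ht => ?_
  have ht' := interior_subset ht
  exact div_nonpos_of_nonpos_of_nonneg (sub_nonpos.2 (h t ht')) (pow_pos (hpos t ht') _).le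

theorem exists_eventually_le_mul_pow {f f' : ℝ → ℝ} {N : ℕ} (hf : ∀ t, HasDerivAt f (f' t) t)
    (h : ∀ᶠ t in atTop, t * f' t ≤ N * f t) : ∃ K, ∀ᶠ t in atTop, f t ≤ K * t ^ N := by
  obtain ⟨a, ha⟩ := eventually_atTop.1 (h.and (eventually_gt_atTop 0))
  refine ⟨f a / a ^ N, eventually_atTop.2 ⟨a, fun t ht => ?_⟩⟩
  have := antitoneOn_div_pow (ha a le_rfl).2 (fun t _ => hf t) (fun t ht => (ha t ht).1)
    Set.self_mem_Ici ht ht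
  exact (div_le_iff₀ (pow_pos (ha t ht).2 N)).1 this

theorem eventually_nonpos_of_le_mul_pow {f f' : ℝ → ℝ} {N : ℕ} {K : ℝ}
    (hf : ∀ t, HasDerivAt f (f' t) t) (h : ∀ᶠ t in atTop, (N + 1) * f t ≤ t * f' t)
    (hK : ∀ᶠ t in atTop, f t ≤ K * t ^ N) : ∀ᶠ t in atTop, f t ≤ 0 := by
  obtain ⟨a, ha⟩ := eventually_atTop.1 (h.and (eventually_gt_atTop 0))
  have hanti := antitoneOn_div_pow (f := fun t => -f t) (N := N + 1) (ha a le_rfl).2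
    (fun t _ => (hf t).neg) (fun t ht => by push_cast; linarith [(ha t ht).1])
  filter_upwards [eventually_ge_atTop a] with t ht
  have hlim : Tendsto (fun s : ℝ => K * s⁻¹) atTop (𝓝 0) := by
    simpa using tendsto_inv_atTop_zero.const_mul K
  have hle : f t / t ^ (N + 1) ≤ 0 := by
    refine ge_of_tendsto hlim ?_
    filter_upwards [hK, eventually_ge_atTop t] with s hs hts
    have hs0 := (ha s (ht.trans hts)).2
    have hmono : f t / t ^ (N + 1) ≤ f s / s ^ (N + 1) := by
      simpa only [neg_div, neg_le_neg_iff] using hanti ht (ht.trans hts) hts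
    refine hmono.trans ((div_le_iff₀ (pow_pos hs0 _)).2 (hs.trans_eq ?_))
    field_simp; ring
  simpa using (div_le_iff₀ (pow_pos (ha t ht).2 (N + 1))).1 hle

theorem isBigO_pow_of_norm_sq_le {E : Type*} [NormedAddCommGroup E] {u : ℝ → E} {K : ℝ} {N : ℕ}
    (h : ∀ᶠ t in atTop, ‖u t‖ ^ 2 ≤ K * t ^ N) : u =O[atTop] fun t : ℝ => t ^ N := by
  refine IsBigO.of_norm_left (IsBigO.of_pow two_ne_zero (IsBigO.of_bound |K| ?_))
  filter_upwards [h, eventually_ge_atTop 1] with t ht ht1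
  have hN : t ^ N ≤ (t ^ N) ^ 2 := le_self_pow₀ (one_le_pow₀ ht1) two_ne_zero
  have ht0 : 0 ≤ t ^ N := by positivity
  rw [Pi.pow_apply, Pi.pow_apply, norm_pow, norm_norm, Real.norm_of_nonneg (sq_nonneg _)]
  calc ‖u t‖ ^ 2 ≤ K * t ^ N := ht
    _ ≤ |K| * (t ^ N) ^ 2 := mul_le_mul (le_abs_self K) hN ht0 (abs_nonneg K)

theorem isBigO_pow_succ_of_hasDerivAt {E : Type*} [NormedAddCommGroup E] [NormedSpace ℝ E]
    {f f' : ℝ → E} {n : ℕ} (hf : ∀ t, HasDerivAt f (f' t) t)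
    (h : f' =O[atTop] fun t : ℝ => t ^ n) : f =O[atTop] fun t : ℝ => t ^ (n + 1) := by
  obtain ⟨C, hC0, hC⟩ := h.exists_nonneg
  obtain ⟨a, ha⟩ := eventually_atTop.1 (hC.bound.and (eventually_ge_atTop 1))
  have ha1 := (ha a le_rfl).2
  refine IsBigO.of_bound (C + ‖f a‖) (eventually_atTop.2 ⟨a, fun t ht => ?_⟩)
  have ht1 : 1 ≤ t := ha1.trans ht
  have hmv : ‖f t - f a‖ ≤ C * t ^ n * (t - a) := by
    refine norm_image_sub_le_of_norm_deriv_le_segment' (fun s _ => (hf s).hasDerivWithinAt)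
      (fun s hs => ?_) t ⟨ht, le_rfl⟩
    refine (ha s hs.1).1.trans ?_
    have hs0 : 0 ≤ s := by linarith [hs.1]
    rw [Real.norm_of_nonneg (by positivity)]
    gcongr
    exact hs.2.le
  rw [Real.norm_of_nonneg (by positivity)]
  have h1 : 1 ≤ t ^ (n + 1) := one_le_pow₀ ht1
  calc ‖f t‖ ≤ ‖f t - f a‖ + ‖f a‖ := norm_le_norm_sub_add _ _
    _ ≤ C * t ^ n * t + ‖f a‖ * t ^ (n + 1) := by
      gcongr
      · exact hmv.trans (by gcongr; linarith)
      · exact le_mul_of_one_le_right (norm_nonneg _) h1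
    _ = (C + ‖f a‖) * t ^ (n + 1) := by ring

end HalfLine

section HalfLineSystem

open Asymptotics

open scoped RealInnerProductSpace

theorem real_inner_mul_self_right (z q : ℂ) : ⟪z, q * z⟫ = q.re * ‖z‖ ^ 2 := by
  rw [Complex.inner, mul_assoc, Complex.mul_conj, Complex.re_mul_ofReal,
    Complex.normSq_eq_norm_sq]

theorem exists_isBigO_pow_of_mul_deriv_isBigO {U V : ℝ → ℂ} (hU : ∀ t, HasDerivAt U (V t) t)
    (h : (fun t : ℝ => t * V t) =O[atTop] U) : ∃ N : ℕ, U =O[atTop] fun t : ℝ => t ^ N := by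
  obtain ⟨M, hM⟩ := h.bound
  obtain ⟨N, hN⟩ := exists_nat_ge (2 * M)
  obtain ⟨K, hK⟩ := exists_eventually_le_mul_pow (N := N) (fun t => (hU t).norm_sq) (by
    filter_upwards [hM, eventually_gt_atTop 0] with t hMt ht
    rw [norm_mul, Complex.norm_of_nonneg ht.le] at hMt
    calc t * (2 * ⟪U t, V t⟫) ≤ t * (2 * (‖U t‖ * ‖V t‖)) := by
          gcongr
          exact real_inner_le_norm _ _
      _ = 2 * ‖U t‖ * (t * ‖V t‖) := by ring
      _ ≤ 2 * ‖U t‖ * (M * ‖U t‖) := by gcongr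
      _ = 2 * M * ‖U t‖ ^ 2 := by ring
      _ ≤ N * ‖U t‖ ^ 2 := by gcongr)
  exact ⟨N, isBigO_pow_of_norm_sq_le hK⟩

theorem inner_damped_le {u v q s : ℂ} {k : ℕ} {c C t : ℝ}
    (hq : q.re ≤ -(c * t ^ (k + 1))) (hs : ‖s‖ ≤ C * t ^ k) :
    ⟪v, 2 * q * v + s * u⟫ ≤ C * t ^ k * ‖u‖ * ‖v‖ - 2 * c * t ^ (k + 1) * ‖v‖ ^ 2 := by
  have hdamp : ⟪v, 2 * q * v⟫ ≤ -(2 * c * t ^ (k + 1)) * ‖v‖ ^ 2 := by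
    rw [real_inner_mul_self_right]
    gcongr
    simp only [mul_re, re_ofNat, im_ofNat]
    linarith
  have hsource : ⟪v, s * u⟫ ≤ C * t ^ k * ‖u‖ * ‖v‖ := by
    refine (real_inner_le_norm _ _).trans ?_
    rw [norm_mul, mul_comm]
    gcongr
  rw [inner_add_right]
  linarith

theorem damped_energy_le {u v q s : ℂ} {k N : ℕ} {c C t : ℝ} (hc : 0 < c)
    (hN : k + (1 + C) ^ 2 / (4 * c) ≤ N) (ht : 0 < t)
    (hq : q.re ≤ -(c * t ^ (k + 1))) (hs : ‖s‖ ≤ C * t ^ k) :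
    t * (k * t ^ (k - 1) * ‖u‖ ^ 2 + t ^ k * (2 * ⟪u, v⟫) + 2 * ⟪v, 2 * q * v + s * u⟫) ≤
      N * (t ^ k * ‖u‖ ^ 2 + ‖v‖ ^ 2) := by
  have hV := inner_damped_le (u := u) (v := v) hq hs
  have hU : t ^ k * ⟪u, v⟫ ≤ t ^ k * (‖u‖ * ‖v‖) := by
    gcongr
    exact real_inner_le_norm u v
  have amgm : 2 * (1 + C) * (‖u‖ * (t * ‖v‖)) ≤
      (1 + C) ^ 2 / (4 * c) * ‖u‖ ^ 2 + 4 * c * (t * ‖v‖) ^ 2 := by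
    have : 0 ≤ ((1 + C) * ‖u‖ - 4 * c * (t * ‖v‖)) ^ 2 / (4 * c) := by positivity
    have : ((1 + C) * ‖u‖ - 4 * c * (t * ‖v‖)) ^ 2 / (4 * c) = (1 + C) ^ 2 / (4 * c) * ‖u‖ ^ 2 +
      4 * c * (t * ‖v‖) ^ 2 - 2 * (1 + C) * (‖u‖ * (t * ‖v‖)) := by field_simp; ring
    linarith
  calc t * (k * t ^ (k - 1) * ‖u‖ ^ 2 + t ^ k * (2 * ⟪u, v⟫) + 2 * ⟪v, 2 * q * v + s * u⟫)
      = k * t ^ k * ‖u‖ ^ 2 + 2 * t * (t ^ k * ⟪u, v⟫ + ⟪v, 2 * q * v + s * u⟫) := by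
        rw [← mul_natCast_mul_pow_sub_one k t]; ring
    _ ≤ k * t ^ k * ‖u‖ ^ 2 + 2 * t * (t ^ k * (‖u‖ * ‖v‖) +
          (C * t ^ k * ‖u‖ * ‖v‖ - 2 * c * t ^ (k + 1) * ‖v‖ ^ 2)) := by gcongr
    _ = t ^ k * (k * ‖u‖ ^ 2 + (2 * (1 + C) * (‖u‖ * (t * ‖v‖)) - 4 * c * (t * ‖v‖) ^ 2)) := by
        ring
    _ ≤ t ^ k * ((k + (1 + C) ^ 2 / (4 * c)) * ‖u‖ ^ 2) := by
        gcongr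
        linarith
    _ ≤ t ^ k * (N * ‖u‖ ^ 2) := by gcongr
    _ ≤ N * (t ^ k * ‖u‖ ^ 2 + ‖v‖ ^ 2) := by nlinarith [mul_nonneg N.cast_nonneg (sq_nonneg ‖v‖)]

theorem exists_isBigO_pow_of_damped {U V Q S : ℝ → ℂ} {k : ℕ} {c : ℝ} (hc : 0 < c)
    (hU : ∀ t, HasDerivAt U (V t) t) (hV : ∀ t, HasDerivAt V (2 * Q t * V t + S t * U t) t)
    (hQ : ∀ᶠ t in atTop, (Q t).re ≤ -(c * t ^ (k + 1)))
    (hS : S =O[atTop] fun t : ℝ => t ^ k) : ∃ N : ℕ, U =O[atTop] fun t : ℝ => t ^ N := by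
  obtain ⟨C, hC⟩ := hS.bound
  obtain ⟨N, hN⟩ := exists_nat_ge (k + (1 + C) ^ 2 / (4 * c))
  -- The weight `t ^ k` is the size of `S`, so that AM-GM lets the damping absorb both cross terms.
  set E : ℝ → ℝ := fun t => t ^ k * ‖U t‖ ^ 2 + ‖V t‖ ^ 2
  have hE' : ∀ t, HasDerivAt E (k * t ^ (k - 1) * ‖U t‖ ^ 2 + t ^ k * (2 * ⟪U t, V t⟫) +
      2 * ⟪V t, 2 * Q t * V t + S t * U t⟫) t := fun t =>
    ((hasDerivAt_pow k t).mul (hU t).norm_sq).add (hV t).norm_sq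
  obtain ⟨K, hK⟩ := exists_eventually_le_mul_pow (N := N) hE' (by
    filter_upwards [hQ, hC, eventually_gt_atTop 0] with t hQt hSt ht
    exact damped_energy_le hc hN ht hQt (by simpa [abs_of_pos ht] using hSt))
  refine ⟨N, isBigO_pow_of_norm_sq_le (K := K) ?_⟩
  filter_upwards [hK, eventually_ge_atTop 1] with t hKt ht
  refine le_trans ?_ hKt
  have hUt : ‖U t‖ ^ 2 ≤ t ^ k * ‖U t‖ ^ 2 :=
    le_mul_of_one_le_left (sq_nonneg _) (one_le_pow₀ ht)
  exact hUt.trans (le_add_of_nonneg_right (sq_nonneg _))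

theorem recessive_energy_le {y w q s : ℂ} {t L M ν : ℝ} (ht : 0 < t) (hM : 0 < M) (hν : 0 ≤ ν)
    (hq : L ≤ q.re) (hs : 2 * t * ‖s‖ ≤ M * L) (hML : 2 * M ≤ t * L) (hνL : ν ≤ t * L) :
    ν * (t ^ 2 * ‖w‖ ^ 2 - M ^ 2 * ‖y‖ ^ 2) ≤ t * (2 * t * ‖w‖ ^ 2 +
      t ^ 2 * (2 * ⟪w, q * w + s * y⟫) - M ^ 2 * (2 * ⟪y, w - q * y⟫)) := by
  have hw : L * ‖w‖ ^ 2 - ‖w‖ * (‖s‖ * ‖y‖) ≤ ⟪w, q * w + s * y⟫ := by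
    have := neg_le_of_abs_le (abs_real_inner_le_norm w (s * y))
    rw [norm_mul] at this
    rw [inner_add_right, real_inner_mul_self_right]
    linarith [mul_le_mul_of_nonneg_right hq (sq_nonneg ‖w‖)]
  have hy : ⟪y, w - q * y⟫ ≤ ‖y‖ * ‖w‖ - L * ‖y‖ ^ 2 := by
    rw [inner_sub_right, real_inner_mul_self_right]
    linarith [mul_le_mul_of_nonneg_right hq (sq_nonneg ‖y‖), real_inner_le_norm y w]
  have hsource : t ^ 2 * (‖w‖ * (‖s‖ * ‖y‖)) ≤ L / 2 * (t * ‖w‖) * (M * ‖y‖) := by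
    have := mul_le_mul_of_nonneg_right hs (by positivity : 0 ≤ t * ‖w‖ * ‖y‖ / 2)
    linarith
  have hcoupling : t * (M ^ 2 * (‖y‖ * ‖w‖)) ≤ t * (L / 2 * (t * ‖w‖) * (M * ‖y‖)) := by
    have := mul_le_mul_of_nonneg_right hML (by positivity : 0 ≤ t * ‖w‖ * (M * ‖y‖) / 2)
    linarith
  have hL : 0 ≤ t * L := hν.trans hνL
  have amgm := mul_nonneg hL (sq_nonneg (t * ‖w‖ - M * ‖y‖))
  calc ν * (t ^ 2 * ‖w‖ ^ 2 - M ^ 2 * ‖y‖ ^ 2) ≤ ν * (t * ‖w‖) ^ 2 := by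
        gcongr
        rw [mul_pow]
        linarith [mul_nonneg (sq_nonneg M) (sq_nonneg ‖y‖)]
    _ ≤ t * L * (t * ‖w‖) ^ 2 := by gcongr
    _ ≤ t * (2 * L * ((t * ‖w‖) ^ 2 + (M * ‖y‖) ^ 2) - 2 * L * (t * ‖w‖) * (M * ‖y‖)) := by
        linarith [mul_nonneg hL (sq_nonneg (M * ‖y‖))]
    _ ≤ t * (2 * (t ^ 2 * (L * ‖w‖ ^ 2 - ‖w‖ * (‖s‖ * ‖y‖))) -
          2 * (M ^ 2 * (‖y‖ * ‖w‖ - L * ‖y‖ ^ 2))) := by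
        linarith [mul_le_mul_of_nonneg_left hsource ht.le]
    _ ≤ t * (2 * (t ^ 2 * ⟪w, q * w + s * y⟫) - 2 * (M ^ 2 * ⟪y, w - q * y⟫)) := by gcongr
    _ ≤ _ := by
        gcongr t * ?_
        linarith [mul_nonneg ht.le (sq_nonneg ‖w‖)]

theorem mul_isBigO_of_recessive {Y W Q S : ℝ → ℂ} {k N : ℕ} {c : ℝ} (hc : 0 < c)
    (hY : ∀ t, HasDerivAt Y (W t - Q t * Y t) t)
    (hW : ∀ t, HasDerivAt W (Q t * W t + S t * Y t) t)
    (hQ : ∀ᶠ t in atTop, c * t ^ (k + 1) ≤ (Q t).re)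
    (hS : S =O[atTop] fun t : ℝ => t ^ k) (hWN : W =O[atTop] fun t : ℝ => t ^ N) :
    (fun t : ℝ => t * W t) =O[atTop] Y := by
  obtain ⟨C, hC0, hC⟩ := hS.exists_pos
  obtain ⟨D, hD⟩ := hWN.bound
  set M := 2 * C / c with hM
  have hM0 : 0 < M := by positivity
  -- `t * G' ≥ ν * G` eventually, for every `ν`, so a positive value of `G` would force growth
  -- faster than any power of `t`.
  set G : ℝ → ℝ := fun t => t ^ 2 * ‖W t‖ ^ 2 - M ^ 2 * ‖Y t‖ ^ 2
  have hG' : ∀ t, HasDerivAt G (2 * t * ‖W t‖ ^ 2 + t ^ 2 * (2 * ⟪W t, Q t * W t + S t * Y t⟫) -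
      M ^ 2 * (2 * ⟪Y t, W t - Q t * Y t⟫)) t := fun t => by
    refine (((hasDerivAt_pow 2 t).mul (hW t).norm_sq).sub
      ((hY t).norm_sq.const_mul (M ^ 2))).congr_deriv ?_
    norm_num only [pow_one]
  have hgrow : Tendsto (fun t : ℝ => t * (c * t ^ (k + 1))) atTop atTop :=
    tendsto_id.atTop_mul_atTop₀ ((tendsto_pow_atTop k.succ_ne_zero).const_mul_atTop hc)
  have hGM : ∀ᶠ t in atTop, G t ≤ 0 := by
    refine eventually_nonpos_of_le_mul_pow (N := 2 + 2 * N) (K := D ^ 2) hG' ?_ ?_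
    · filter_upwards [hQ, hC.bound, eventually_gt_atTop 0, hgrow.eventually_ge_atTop (2 * M),
        hgrow.eventually_ge_atTop ((2 + 2 * N : ℕ) + 1)] with t hQt hSt ht hMt hNt
      refine recessive_energy_le ht hM0 (by positivity) hQt ?_ hMt hNt
      rw [norm_pow, Real.norm_of_nonneg ht.le] at hSt
      calc 2 * t * ‖S t‖ ≤ 2 * t * (C * t ^ k) := by gcongr
        _ = M * (c * t ^ (k + 1)) := by rw [hM]; field_simp; ring
    · filter_upwards [hD, eventually_gt_atTop 0] with t hDt ht
      rw [norm_pow, Real.norm_of_nonneg ht.le] at hDt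
      calc G t ≤ t ^ 2 * ‖W t‖ ^ 2 := sub_le_self _ (by positivity)
        _ ≤ t ^ 2 * (D * t ^ N) ^ 2 := by gcongr
        _ = D ^ 2 * t ^ (2 + 2 * N) := by ring
  refine IsBigO.of_bound M ?_
  filter_upwards [hGM, eventually_gt_atTop 0] with t hGt ht
  rw [norm_mul, Complex.norm_of_nonneg ht.le]
  refine (sq_le_sq₀ (by positivity) (by positivity)).1 ?_
  rw [mul_pow, mul_pow]
  exact sub_nonpos.1 hGt

end HalfLineSystem

section EntireFunction

open Asymptotics

theorem finite_setOf_pow_eq_one {M : ℕ} (hM : 0 < M) : {w : ℂ | w ^ M = 1}.Finite :=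
  (Polynomial.nthRootsFinset M (1 : ℂ)).finite_toSet.subset fun _ hw =>
    (Polynomial.mem_nthRootsFinset hM _).2 hw

theorem dslope_zero_isBigO_of_ray {u : ℂ → ℂ} {w : ℂ} {N : ℕ} (hw : ‖w‖ = 1)
    (h : (fun t : ℝ => u (t * w)) =O[atTop] fun t => t ^ (N + 1)) :
    (fun t : ℝ => dslope u 0 (t * w)) =O[atTop] fun t => t ^ N := by
  obtain ⟨C, hC⟩ := h.bound
  refine IsBigO.of_bound (C + ‖u 0‖) ?_
  filter_upwards [hC, eventually_ge_atTop 1] with t ht ht1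
  have ht0 : 0 < t := one_pos.trans_le ht1
  have hnorm : ‖t * w‖ = t := by rw [norm_mul, hw, mul_one, Complex.norm_of_nonneg ht0.le]
  have hne : t * w ≠ 0 := by rwa [← norm_pos_iff, hnorm]
  rw [Real.norm_of_nonneg (by positivity)] at ht ⊢
  rw [dslope_of_ne _ hne, slope_def_field, sub_zero, norm_div, hnorm, div_le_iff₀ ht0]
  calc ‖u (t * w) - u 0‖ ≤ ‖u (t * w)‖ + ‖u 0‖ := norm_sub_le _ _
    _ ≤ C * t ^ (N + 1) + ‖u 0‖ * t ^ (N + 1) :=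
      add_le_add ht (le_mul_of_one_le_right (norm_nonneg _) (one_le_pow₀ ht1))
    _ = (C + ‖u 0‖) * t ^ N * t := by ring

/-- `u` grows at most like `exp (B * ‖z‖ ^ m)`: for entire `u`, order at most `m` and, if equal
to `m`, finite type. -/
def HasExpGrowth (m : ℕ) (u : ℂ → ℂ) : Prop :=
  ∃ A B : ℝ, 0 ≤ B ∧ ∀ z, ‖u z‖ ≤ A * Real.exp (B * ‖z‖ ^ m)

namespace HasExpGrowth

variable {m : ℕ} {u : ℂ → ℂ}

theorem dslope_zero (hu : HasExpGrowth m u) (hd : Differentiable ℂ u) :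
    HasExpGrowth m (dslope u 0) := by
  obtain ⟨A, B, hB, hA⟩ := hu
  have hcont : Continuous (dslope u 0) := continuousOn_univ.1
    ((continuousOn_dslope Filter.univ_mem).2 ⟨hd.continuous.continuousOn, hd 0⟩)
  obtain ⟨C, hC⟩ := (isCompact_closedBall (0 : ℂ) 1).exists_bound_of_continuousOn
    hcont.continuousOn
  have hC0 : 0 ≤ C := (norm_nonneg _).trans (hC 0 (by simp))
  have hA0 : 0 ≤ A * Real.exp (B * ‖(0 : ℂ)‖ ^ m) := (norm_nonneg _).trans (hA 0)
  have hA0 : 0 ≤ A := nonneg_of_mul_nonneg_left hA0 (Real.exp_pos _)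
  refine ⟨A + ‖u 0‖ + C, B, hB, fun z => ?_⟩
  have hexp : 1 ≤ Real.exp (B * ‖z‖ ^ m) := Real.one_le_exp (by positivity)
  rcases le_total ‖z‖ 1 with hz | hz
  · refine (hC z (mem_closedBall_zero_iff.2 hz)).trans ?_
    nlinarith [norm_nonneg (u 0)]
  · have hz0 : z ≠ 0 := norm_pos_iff.1 (one_pos.trans_le hz)
    rw [dslope_of_ne _ hz0, slope_def_field, sub_zero, norm_div]
    refine (div_le_self (norm_nonneg _) hz).trans ((norm_sub_le _ _).trans ?_)
    nlinarith [norm_nonneg (u 0), hA z]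

theorem norm_comp_exp_le_of_mem_strip (hu : HasExpGrowth m u) (hd : Differentiable ℂ u)
    {a b C : ℝ} (hab : m * (b - a) < Real.pi) (ha : ∀ z : ℂ, z.im = a → ‖u (exp z)‖ ≤ C)
    (hb : ∀ z : ℂ, z.im = b → ‖u (exp z)‖ ≤ C) {z : ℂ} (hza : a ≤ z.im) (hzb : z.im ≤ b) :
    ‖u (exp z)‖ ≤ C := by
  rcases hza.eq_or_lt with h | hza'
  · exact ha z h.symm
  obtain ⟨A, B, hB, hA⟩ := hu
  refine PhragmenLindelof.horizontal_strip (f := fun z => u (exp z))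
    (hd.comp differentiable_exp).diffContOnCl
    ⟨m, (lt_div_iff₀ (by linarith)).2 hab, B, IsBigO.of_bound A (Eventually.of_forall fun x => ?_)⟩
    ha hb hza hzb
  have hA0 : 0 ≤ A := nonneg_of_mul_nonneg_left ((norm_nonneg _).trans (hA x)) (Real.exp_pos _)
  refine (hA (exp x)).trans ?_
  rw [norm_exp, ← Real.exp_nat_mul, Real.norm_of_nonneg (Real.exp_pos _).le]
  gcongr
  exact le_abs_self _

theorem norm_le_of_rays (hu : HasExpGrowth m u) (hd : Differentiable ℂ u) {M : ℕ}
    (hM : 2 * m < M) {C : ℝ} (hC : ∀ w : ℂ, w ^ M = 1 → ∀ t : ℝ, 0 ≤ t → ‖u (t * w)‖ ≤ C)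
    (z : ℂ) : ‖u z‖ ≤ C := by
  rcases eq_or_ne z 0 with rfl | hz
  · simpa using hC 1 (one_pow M) 0 le_rfl
  have hM0 : (0 : ℝ) < M := by exact_mod_cast (Nat.zero_le _).trans_lt hM
  set δ := 2 * Real.pi / M with hδ
  have hδ0 : 0 < δ := by positivity
  have hray : ∀ (l : ℤ) (x : ℂ), x.im = l * δ → ‖u (exp x)‖ ≤ C := fun l x hx => by
    have hroot : exp (x.im * I) ^ M = 1 := by
      rw [← exp_nat_mul, exp_eq_one_iff]
      refine ⟨l, ?_⟩
      rw [hx, hδ]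
      have hM' : (M : ℂ) ≠ 0 := by exact_mod_cast hM0.ne'
      push_cast
      field_simp
    rw [← Complex.re_add_im x, exp_add, ← ofReal_exp]
    exact hC _ hroot _ (Real.exp_pos _).le
  set l := ⌊arg z / δ⌋
  have hsector : (l : ℝ) * δ ≤ (log z).im ∧ (log z).im ≤ (l + 1 : ℤ) * δ := by
    rw [log_im, ← le_div_iff₀ hδ0, ← div_le_iff₀ hδ0]
    exact ⟨Int.floor_le _, by push_cast; exact (Int.lt_floor_add_one _).le⟩
  rw [← exp_log hz]
  -- Sectors of opening `2π / M < π / m` are images under `exp` of strips, where Phragmén–Lindelöf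
  -- applies.
  refine hu.norm_comp_exp_le_of_mem_strip hd ?_ (hray l) (hray (l + 1)) hsector.1 hsector.2
  have : (2 * m : ℝ) < M := by exact_mod_cast hM
  calc (m : ℝ) * ((l + 1 : ℤ) * δ - l * δ) = 2 * m / M * Real.pi := by
        rw [hδ]; push_cast; ring
    _ < 1 * Real.pi := by gcongr; rwa [div_lt_one hM0]
    _ = Real.pi := one_mul _

theorem exists_forall_eq_of_rays (hu : HasExpGrowth m u) (hd : Differentiable ℂ u) {M : ℕ}
    (hM : 2 * m < M)
    (h : ∀ w : ℂ, w ^ M = 1 → (fun t : ℝ => u (t * w)) =O[atTop] fun _ => (1 : ℝ)) :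
    ∃ c, ∀ z, u z = c := by
  have hbdd : ∀ w : ℂ, w ^ M = 1 → ∃ C, ∀ t : ℝ, 0 ≤ t → ‖u (t * w)‖ ≤ C := fun w hw => by
    obtain ⟨C, hC⟩ := (h w hw).bound
    obtain ⟨a, ha⟩ := eventually_atTop.1 hC
    obtain ⟨C', hC'⟩ := (isCompact_Icc (a := 0) (b := a)).exists_bound_of_continuousOn
      (f := fun t : ℝ => u (t * w)) (by have := hd.continuous; fun_prop)
    refine ⟨max C C', fun t ht => ?_⟩
    rcases le_total a t with hat | hat
    · exact le_max_of_le_left (by simpa using ha t hat)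
    · exact le_max_of_le_right (hC' t ⟨ht, hat⟩)
  choose! C hC using hbdd
  obtain ⟨K, hK⟩ := ((finite_setOf_pow_eq_one (by omega : 0 < M)).image C).bddAbove
  have hle := hu.norm_le_of_rays hd hM fun w hw t ht =>
    (hC w hw t ht).trans (hK (Set.mem_image_of_mem C hw))
  exact ⟨u 0, fun z => hd.apply_eq_apply_of_bounded
    (isBounded_iff_forall_norm_le.2 ⟨K, Set.forall_mem_range.2 hle⟩) z 0⟩

theorem exists_polynomial_of_rays_isBigO_pow (hu : HasExpGrowth m u)
    (hd : Differentiable ℂ u) {M N : ℕ} (hM : 2 * m < M)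
    (h : ∀ w : ℂ, w ^ M = 1 → (fun t : ℝ => u (t * w)) =O[atTop] fun t => t ^ N) :
    ∃ p : Polynomial ℂ, ∀ z, u z = p.eval z := by
  induction N generalizing u with
  | zero =>
    obtain ⟨c, hc⟩ := hu.exists_forall_eq_of_rays hd hM (by simpa only [pow_zero] using h)
    exact ⟨Polynomial.C c, fun z => by rw [hc, Polynomial.eval_C]⟩
  | succ N ih =>
    have hd' : Differentiable ℂ (dslope u 0) := differentiableOn_univ.1
      ((differentiableOn_dslope Filter.univ_mem).2 hd.differentiableOn)
    obtain ⟨p, hp⟩ := ih (hu.dslope_zero hd) hd' fun w hw =>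
      dslope_zero_isBigO_of_ray (norm_eq_one_of_pow_eq_one hw (by omega)) (h w hw)
    refine ⟨Polynomial.C (u 0) + Polynomial.X * p, fun z => ?_⟩
    have := sub_smul_dslope u 0 z
    rw [hp, sub_zero, smul_eq_mul] at this
    simp [this]

theorem exists_polynomial_of_rays (hu : HasExpGrowth m u) (hd : Differentiable ℂ u) {M : ℕ}
    (hM : 2 * m < M)
    (h : ∀ w : ℂ, w ^ M = 1 → ∃ N : ℕ, (fun t : ℝ => u (t * w)) =O[atTop] fun t => t ^ N) :
    ∃ p : Polynomial ℂ, ∀ z, u z = p.eval z := by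
  choose! N hN using h
  obtain ⟨K, hK⟩ := ((finite_setOf_pow_eq_one (by omega : 0 < M)).image N).bddAbove
  exact hu.exists_polynomial_of_rays_isBigO_pow hd hM fun w hw =>
    (hN w hw).trans
      (IsBigO.pow_of_le_right (eventually_ge_atTop 1) (hK (Set.mem_image_of_mem N hw)))

end HasExpGrowth

end EntireFunction

section Rays

open Asymptotics Polynomial Bornology

theorem hasDerivAt_comp_ray {f : ℂ → ℂ} {f' w : ℂ} {t : ℝ} (hf : HasDerivAt f f' (t * w)) :
    HasDerivAt (fun s : ℝ => f (s * w)) (w * f') t := by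
  have hw : HasDerivAt (fun s : ℝ => (s : ℂ) * w) w t := by
    simpa using (hasDerivAt_id t).ofReal_comp.mul_const w
  exact hf.scomp t hw

theorem tendsto_ray_cobounded {w : ℂ} (hw : w ≠ 0) :
    Tendsto (fun t : ℝ => (t : ℂ) * w) atTop (cobounded ℂ) := by
  rw [← tendsto_norm_atTop_iff_cobounded]
  simp only [norm_mul, norm_real]
  exact (tendsto_norm_atTop_atTop).atTop_mul_const (norm_pos_iff.2 hw)

theorem eval_ray_isBigO {p : ℂ[X]} {n : ℕ} (hp : p.natDegree ≤ n) {w : ℂ} (hw : w ≠ 0) :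
    (fun t : ℝ => p.eval (t * w)) =O[atTop] fun t : ℝ => t ^ n := by
  have hdeg : p.degree ≤ (X ^ n : ℂ[X]).degree := by
    rw [degree_X_pow]
    exact degree_le_of_natDegree_le hp
  refine ((isBigO_cobounded_of_degree_le hdeg).comp_tendsto (tendsto_ray_cobounded hw)).trans
    (IsBigO.of_bound (‖w‖ ^ n) (Eventually.of_forall fun t => ?_))
  simp [mul_pow, mul_comm]

theorem eventually_abs_re_eval_ray_le {q : ℂ[X]} {n : ℕ} (hq : q.Monic) (hn : q.natDegree = n)
    {w : ℂ} (hw : w ≠ 0) {ε : ℝ} (hε : 0 < ε) :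
    ∀ᶠ t : ℝ in atTop, |(w * q.eval (t * w)).re - (w ^ (n + 1)).re * t ^ n| ≤ ε * t ^ n := by
  have hlead : (fun t : ℝ => q.eval (t * w) - (t * w) ^ n) =o[atTop] fun t : ℝ => (t * w) ^ n := by
    have h := isEquivalent_cobounded_leading_monomial (P := q)
    simp only [hq.leadingCoeff, hn, one_mul] at h
    exact h.isLittleO.comp_tendsto (tendsto_ray_cobounded hw)
  have hw0 : 0 < ‖w‖ ^ (n + 1) := by positivity
  filter_upwards [hlead.bound (div_pos hε hw0), eventually_ge_atTop 0] with t ht ht0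
  have hre : (w * q.eval (t * w)).re - (w ^ (n + 1)).re * t ^ n =
      (w * (q.eval (t * w) - (t * w) ^ n)).re := by
    rw [← Complex.re_mul_ofReal, ← Complex.sub_re]
    push_cast
    ring_nf
  calc |(w * q.eval (t * w)).re - (w ^ (n + 1)).re * t ^ n|
      ≤ ‖w‖ * ‖q.eval (t * w) - (t * w) ^ n‖ := by
        rw [hre, ← norm_mul]
        exact abs_re_le_norm _
    _ ≤ ‖w‖ * (ε / ‖w‖ ^ (n + 1) * ‖(t * w) ^ n‖) := by gcongr
    _ = ε * t ^ n := by
        rw [norm_pow, norm_mul, Complex.norm_of_nonneg ht0]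
        field_simp
        ring

end Rays

section FiniteOrder

open Polynomial

theorem exists_norm_eval_le {p : ℂ[X]} {n : ℕ} (hp : p.natDegree ≤ n) :
    ∃ C : ℝ, 0 ≤ C ∧ ∀ z, ‖p.eval z‖ ≤ C * (1 + ‖z‖ ^ n) := by
  refine ⟨∑ i ∈ Finset.range (n + 1), ‖p.coeff i‖, by positivity, fun z => ?_⟩
  rw [eval_eq_sum_range' (Nat.lt_succ_of_le hp), Finset.sum_mul]
  refine norm_sum_le_of_le _ fun i hi => ?_
  rw [norm_mul, norm_pow]
  gcongr
  rcases le_total ‖z‖ 1 with hz | hz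
  · linarith [pow_le_one₀ (norm_nonneg z) hz (n := i), pow_nonneg (norm_nonneg z) n]
  · linarith [pow_le_pow_right₀ hz (Finset.mem_range_succ_iff.1 hi)]

theorem exists_norm_companion_le {a b : ℂ[X]} {n : ℕ} (ha : a.natDegree ≤ n)
    (hb : b.natDegree ≤ n) : ∃ D : ℝ, 0 ≤ D ∧ ∀ z w : ℂ, ‖z‖ ≤ ‖w‖ → ∀ x y : ℂ,
      ‖(w * y, w * (a.eval z * y + b.eval z * x))‖ ≤ D * (1 + ‖w‖ ^ (n + 1)) * ‖(x, y)‖ := by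
  obtain ⟨A, hA0, hA⟩ := exists_norm_eval_le ha
  obtain ⟨B, hB0, hB⟩ := exists_norm_eval_le hb
  refine ⟨1 + 2 * (A + B), by positivity, fun z w hzw x y => ?_⟩
  have hx : ‖x‖ ≤ ‖(x, y)‖ := norm_fst_le (x, y)
  have hy : ‖y‖ ≤ ‖(x, y)‖ := norm_snd_le (x, y)
  have hpow : ‖z‖ ^ n ≤ ‖w‖ ^ n := by gcongr
  have hw : ‖w‖ ≤ 1 + ‖w‖ ^ (n + 1) := by
    rcases le_total ‖w‖ 1 with h | h
    · exact h.trans (le_add_of_nonneg_right (by positivity))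
    · exact (le_self_pow₀ h n.succ_ne_zero).trans (le_add_of_nonneg_left zero_le_one)
  have hsnd : ‖a.eval z * y + b.eval z * x‖ ≤ (A + B) * (1 + ‖w‖ ^ n) * ‖(x, y)‖ := by
    calc ‖a.eval z * y + b.eval z * x‖ ≤ ‖a.eval z‖ * ‖y‖ + ‖b.eval z‖ * ‖x‖ := by
          simpa only [norm_mul] using norm_add_le (a.eval z * y) (b.eval z * x)
      _ ≤ A * (1 + ‖w‖ ^ n) * ‖(x, y)‖ + B * (1 + ‖w‖ ^ n) * ‖(x, y)‖ := by
          gcongr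
          · exact (hA z).trans (by gcongr)
          · exact (hB z).trans (by gcongr)
      _ = (A + B) * (1 + ‖w‖ ^ n) * ‖(x, y)‖ := by ring
  have hwpow : ‖w‖ * (1 + ‖w‖ ^ n) ≤ 2 * (1 + ‖w‖ ^ (n + 1)) := by
    linarith [pow_succ' ‖w‖ n]
  refine max_le ?_ ?_
  · rw [norm_mul]
    gcongr
    linarith [mul_nonneg (add_nonneg hA0 hB0) ((norm_nonneg w).trans hw)]
  · calc ‖w * (a.eval z * y + b.eval z * x)‖
        ≤ ‖w‖ * ((A + B) * (1 + ‖w‖ ^ n) * ‖(x, y)‖) := by rw [norm_mul]; gcongr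
      _ = (A + B) * (‖w‖ * (1 + ‖w‖ ^ n)) * ‖(x, y)‖ := by ring
      _ ≤ (A + B) * (2 * (1 + ‖w‖ ^ (n + 1))) * ‖(x, y)‖ := by gcongr
      _ = 2 * (A + B) * (1 + ‖w‖ ^ (n + 1)) * ‖(x, y)‖ := by ring
      _ ≤ (1 + 2 * (A + B)) * (1 + ‖w‖ ^ (n + 1)) * ‖(x, y)‖ := by gcongr; linarith

theorem hasExpGrowth_of_hasDerivAt {u v : ℂ → ℂ} {a b : ℂ[X]} {n : ℕ} (ha : a.natDegree ≤ n)
    (hb : b.natDegree ≤ n) (hu : ∀ z, HasDerivAt u (v z) z)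
    (hv : ∀ z, HasDerivAt v (a.eval z * v z + b.eval z * u z) z) : HasExpGrowth (n + 1) u := by
  obtain ⟨D, hD0, hD⟩ := exists_norm_companion_le ha hb
  refine ⟨‖(u 0, v 0)‖ * Real.exp D, D, hD0, fun w => ?_⟩
  set F : ℝ → ℂ × ℂ := fun t => (u (t * w), v (t * w)) with hF
  have hF' : ∀ t : ℝ, HasDerivAt F (w * v (t * w), w * (a.eval (t * w) * v (t * w) +
      b.eval (t * w) * u (t * w))) t := fun t =>
    (hasDerivAt_comp_ray (hu _)).prodMk (hasDerivAt_comp_ray (hv _))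
  have hgronwall := norm_le_gronwallBound_of_norm_deriv_right_le (δ := ‖F 0‖)
    (K := D * (1 + ‖w‖ ^ (n + 1))) (ε := 0) (a := 0) (b := 1)
    (fun t _ => (hF' t).continuousAt.continuousWithinAt) (fun t _ => (hF' t).hasDerivWithinAt)
    le_rfl (fun t ht => by
      rw [add_zero]
      refine hD _ _ ?_ _ _
      rw [norm_mul, Complex.norm_of_nonneg ht.1]
      exact mul_le_of_le_one_left (norm_nonneg w) ht.2.le) 1 ⟨zero_le_one, le_rfl⟩
  rw [gronwallBound_ε0] at hgronwall
  calc ‖u w‖ ≤ ‖F 1‖ := by simp [hF]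
    _ ≤ ‖(u 0, v 0)‖ * Real.exp D * Real.exp (D * ‖w‖ ^ (n + 1)) := by
        refine hgronwall.trans_eq ?_
        rw [mul_assoc ‖(u 0, v 0)‖, ← Real.exp_add]
        simp only [hF, ofReal_zero, zero_mul]
        ring_nf

end FiniteOrder

section FactoredEquation

open Asymptotics Polynomial

theorem re_neg_of_pow_three_eq_one {z : ℂ} (hz : z ^ 3 = 1) (hz1 : z ≠ 1) : z.re < 0 := by
  have hsum : z ^ 2 + z + 1 = 0 :=
    (mul_eq_zero.1 (by linear_combination hz : (z - 1) * (z ^ 2 + z + 1) = 0)).resolve_left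
      (sub_ne_zero.2 hz1)
  have hre : z.re * z.re - z.im * z.im + z.re + 1 = 0 := by
    simpa [sq] using congrArg re hsum
  have him : z.re * z.im + z.im * z.re + z.im = 0 := by
    simpa [sq] using congrArg im hsum
  rcases mul_eq_zero.1 (by linear_combination him : (2 * z.re + 1) * z.im = 0) with h | h
  · linarith only [h]
  · rw [h] at hre
    nlinarith only [hre, sq_nonneg (2 * z.re + 1)]

theorem coeff_mul_derivative_add_natDegree {p q : ℂ[X]} {k : ℕ} (hq : q.Monic)
    (hqn : q.natDegree = k + 1) :
    (q * derivative p).coeff (k + p.natDegree) = p.natDegree * p.leadingCoeff := by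
  rcases hm : p.natDegree with _ | m
  · rw [derivative_of_natDegree_zero hm]
    simp
  · rw [show k + (m + 1) = (k + 1) + m by ring, coeff_mul_add_eq_of_natDegree_le hqn.le
      ((natDegree_derivative_le p).trans (by omega)), ← hqn, hq.coeff_natDegree, one_mul,
      coeff_derivative, leadingCoeff, hm, mul_comm, Nat.cast_add_one]

theorem coeff_eq_neg_two_mul_natDegree {p q S : ℂ[X]} {k : ℕ} (hp : p ≠ 0) (hq : q.Monic)
    (hqn : q.natDegree = k + 1) (hS : S.natDegree ≤ k)
    (h : derivative (derivative p) = 2 * q * derivative p + S * p) :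
    S.coeff k = -2 * p.natDegree := by
  have hder2 : (derivative (derivative p)).coeff (k + p.natDegree) = 0 := by
    rw [coeff_derivative, coeff_derivative, coeff_eq_zero_of_natDegree_lt (by omega), zero_mul,
      zero_mul]
  have htop := congrArg (coeff · (k + p.natDegree)) h
  simp only [two_mul, add_mul, coeff_add, hder2, coeff_mul_derivative_add_natDegree hq hqn,
    coeff_mul_add_eq_of_natDegree_le hS le_rfl, coeff_natDegree] at htop
  have hmul : (S.coeff k + 2 * p.natDegree) * p.leadingCoeff = 0 := by linear_combination -htop
  linear_combination (mul_eq_zero.1 hmul).resolve_right (leadingCoeff_ne_zero.2 hp)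

/-- The equation `y'' = (q² - q' + S) y`, in the factored form `(∂ - q) (∂ + q) y = S y` and
written as a first-order system with `ψ = y' + q y`. -/
structure IsFactoredSol (q S : ℂ[X]) (y ψ : ℂ → ℂ) : Prop where
  hasDerivAt_fst : ∀ z, HasDerivAt y (ψ z - q.eval z * y z) z
  hasDerivAt_snd : ∀ z, HasDerivAt ψ (q.eval z * ψ z + S.eval z * y z) z

namespace IsFactoredSol

variable {q S : ℂ[X]} {y ψ R : ℂ → ℂ} {k : ℕ} {w : ℂ}

theorem of_hasDerivAt {y' : ℂ → ℂ} (hy : ∀ z, HasDerivAt y (y' z) z)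
    (hy' : ∀ z, HasDerivAt y' ((q ^ 2 - derivative q + S).eval z * y z) z) :
    IsFactoredSol q S y fun z => y' z + q.eval z * y z where
  hasDerivAt_fst z := (hy z).congr_deriv (by ring)
  hasDerivAt_snd z := by
    refine ((hy' z).add ((q.hasDerivAt z).mul (hy z))).congr_deriv ?_
    simp only [eval_add, eval_sub, eval_pow]
    ring

theorem hasDerivAt_deriv (h : IsFactoredSol q S y ψ) (z : ℂ) :
    HasDerivAt (fun z => ψ z - q.eval z * y z)
      ((q ^ 2 - derivative q + S).eval z * y z) z := by
  refine ((h.hasDerivAt_snd z).sub ((q.hasDerivAt z).mul (h.hasDerivAt_fst z))).congr_deriv ?_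
  simp only [eval_add, eval_sub, eval_pow]
  ring

theorem hasDerivAt_fst_mul_exp (h : IsFactoredSol q S y ψ)
    (hR : ∀ z, HasDerivAt R (q.eval z) z) (z : ℂ) :
    HasDerivAt (fun z => y z * exp (R z)) (ψ z * exp (R z)) z :=
  ((h.hasDerivAt_fst z).mul (hR z).cexp).congr_deriv (by ring)

theorem hasDerivAt_snd_mul_exp (h : IsFactoredSol q S y ψ)
    (hR : ∀ z, HasDerivAt R (q.eval z) z) (z : ℂ) :
    HasDerivAt (fun z => ψ z * exp (R z))
      ((2 * q).eval z * (ψ z * exp (R z)) + S.eval z * (y z * exp (R z))) z := by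
  refine ((h.hasDerivAt_snd z).mul (hR z).cexp).congr_deriv ?_
  rw [two_mul, eval_add]
  ring

theorem hasExpGrowth_fst_mul_exp (h : IsFactoredSol q S y ψ) (hqn : q.natDegree = k + 1)
    (hS : S.natDegree ≤ k) (hR : ∀ z, HasDerivAt R (q.eval z) z) :
    HasExpGrowth (k + 2) fun z => y z * exp (R z) :=
  hasExpGrowth_of_hasDerivAt (by rw [two_mul]; exact natDegree_add_le_of_degree_le hqn.le hqn.le)
    (hS.trans k.le_succ) (h.hasDerivAt_fst_mul_exp hR) (h.hasDerivAt_snd_mul_exp hR)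

theorem exists_isBigO_ray_of_re_neg (h : IsFactoredSol q S y ψ) (hq : q.Monic)
    (hqn : q.natDegree = k + 1) (hS : S.natDegree ≤ k) (hR : ∀ z, HasDerivAt R (q.eval z) z)
    (hw : (w ^ (k + 2)).re < 0) :
    ∃ N : ℕ, (fun t : ℝ => y (t * w) * exp (R (t * w))) =O[atTop] fun t => t ^ N := by
  have hw0 : w ≠ 0 := by rintro rfl; simp at hw
  refine exists_isBigO_pow_of_damped (k := k) (c := -(w ^ (k + 2)).re / 2) (by linarith)
    (V := fun t => w * (ψ (t * w) * exp (R (t * w)))) (Q := fun t => w * q.eval (t * w))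
    (S := fun t => w ^ 2 * S.eval (t * w))
    (fun t => hasDerivAt_comp_ray (h.hasDerivAt_fst_mul_exp hR _)) (fun t => ?_) ?_
    ((eval_ray_isBigO hS hw0).const_mul_left _)
  · refine ((hasDerivAt_comp_ray (h.hasDerivAt_snd_mul_exp hR _)).const_mul w).congr_deriv ?_
    rw [two_mul q, eval_add]
    ring
  · filter_upwards [eventually_abs_re_eval_ray_le hq hqn hw0
      (by linarith : 0 < -(w ^ (k + 2)).re / 2)] with t ht
    linarith [(abs_le.1 ht).2]

theorem snd_ray_isBigO (h : IsFactoredSol q S y ψ) (hqn : q.natDegree = k + 1)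
    (hS : S.natDegree ≤ k) (hw : w ≠ 0)
    (hy : (fun t : ℝ => y (t * w)) =O[atTop] fun _ => (1 : ℝ)) :
    (fun t : ℝ => w * ψ (t * w)) =O[atTop] fun t => t ^ (2 * k + 3) := by
  have hdeg : (q ^ 2 - derivative q + S).natDegree ≤ 2 * k + 2 := by
    have hsq : (q ^ 2).natDegree ≤ 2 * k + 2 := natDegree_pow_le.trans (by omega)
    have hder : (derivative q).natDegree ≤ 2 * k + 2 :=
      (natDegree_derivative_le q).trans (by omega)
    exact natDegree_add_le_of_degree_le ((natDegree_sub_le_of_le hsq hder).trans (max_self _).le)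
      (hS.trans (by omega))
  have hy'' : (fun t : ℝ => w * (w * ((q ^ 2 - derivative q + S).eval (t * w) * y (t * w))))
      =O[atTop] fun t => t ^ (2 * k + 2) := by
    simpa using (((eval_ray_isBigO hdeg hw).mul hy).const_mul_left w).const_mul_left w
  have hy' := isBigO_pow_succ_of_hasDerivAt
    (fun t => (hasDerivAt_comp_ray (h.hasDerivAt_deriv _)).const_mul w) hy''
  have hqy : (fun t : ℝ => w * (q.eval (t * w) * y (t * w))) =O[atTop]
      fun t => t ^ (2 * k + 3) := by
    simpa using ((eval_ray_isBigO (n := 2 * k + 3) (by omega) hw).mul hy).const_mul_left w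
  exact (hy'.add hqy).congr_left fun t => by ring

theorem exists_isBigO_ray_of_re_pos (h : IsFactoredSol q S y ψ) (hq : q.Monic)
    (hqn : q.natDegree = k + 1) (hS : S.natDegree ≤ k) (hR : ∀ z, HasDerivAt R (q.eval z) z)
    (hw : 0 < (w ^ (k + 2)).re) (hy : (fun t : ℝ => y (t * w)) =O[atTop] fun _ => (1 : ℝ)) :
    ∃ N : ℕ, (fun t : ℝ => y (t * w) * exp (R (t * w))) =O[atTop] fun t => t ^ N := by
  have hw0 : w ≠ 0 := by rintro rfl; simp at hw
  have hψ : (fun t : ℝ => t * (w * ψ (t * w))) =O[atTop] fun t : ℝ => y (t * w) := by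
    refine mul_isBigO_of_recessive (k := k) (half_pos hw) (Q := fun t => w * q.eval (t * w))
      (S := fun t => w ^ 2 * S.eval (t * w)) (fun t => ?_) (fun t => ?_) ?_
      ((eval_ray_isBigO hS hw0).const_mul_left _) (h.snd_ray_isBigO hqn hS hw0 hy)
    · exact (hasDerivAt_comp_ray (h.hasDerivAt_fst _)).congr_deriv (by ring)
    · exact ((hasDerivAt_comp_ray (h.hasDerivAt_snd _)).const_mul w).congr_deriv (by ring)
    · filter_upwards [eventually_abs_re_eval_ray_le hq hqn hw0 (half_pos hw)] with t ht
      linarith [(abs_le.1 ht).1]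
  refine exists_isBigO_pow_of_mul_deriv_isBigO
    (fun t => hasDerivAt_comp_ray (h.hasDerivAt_fst_mul_exp hR _)) ?_
  exact (hψ.mul (isBigO_refl (fun t : ℝ => exp (R (t * w))) atTop)).congr_left fun t => by ring

theorem exists_polynomial (h : IsFactoredSol q S y ψ) (hq : q.Monic)
    (hqn : q.natDegree = k + 1) (hS : S.natDegree ≤ k) (hR : ∀ z, HasDerivAt R (q.eval z) z)
    (hy : ∀ w : ℂ, w ^ (k + 2) = 1 → (fun t : ℝ => y (t * w)) =O[atTop] fun _ => (1 : ℝ)) :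
    ∃ p : ℂ[X], ∀ z, y z * exp (R z) = p.eval z := by
  -- Tripling the `k + 2` central rays of the even sectors makes the sectors between consecutive
  -- rays narrow enough, and `Re (w ^ (k + 2)) < 0` on the new rays.
  refine (h.hasExpGrowth_fst_mul_exp hqn hS hR).exists_polynomial_of_rays (M := (k + 2) * 3)
    (fun z => (h.hasDerivAt_fst_mul_exp hR z).differentiableAt) (by omega) fun w hw => ?_
  rw [pow_mul] at hw
  by_cases hw1 : w ^ (k + 2) = 1
  · exact h.exists_isBigO_ray_of_re_pos hq hqn hS hR (by simp [hw1]) (hy w hw1)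
  · exact h.exists_isBigO_ray_of_re_neg hq hqn hS hR (re_neg_of_pow_three_eq_one hw hw1)

theorem derivative_derivative_eq_of_mul_exp_eq (h : IsFactoredSol q S y ψ)
    (hR : ∀ z, HasDerivAt R (q.eval z) z) {p : ℂ[X]} (hp : ∀ z, y z * exp (R z) = p.eval z) :
    derivative (derivative p) = 2 * q * derivative p + S * p := by
  have hp' : ∀ z, ψ z * exp (R z) = (derivative p).eval z := fun z =>
    ((h.hasDerivAt_fst_mul_exp hR z).congr_of_eventuallyEq
      (.of_forall fun z => (hp z).symm)).unique (p.hasDerivAt z)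
  refine Polynomial.funext fun z => ?_
  have hp'' := ((h.hasDerivAt_snd_mul_exp hR z).congr_of_eventuallyEq
    (.of_forall fun z => (hp' z).symm)).unique ((derivative p).hasDerivAt z)
  rw [← hp'', hp, hp', ← eval_mul, ← eval_mul, ← eval_add]

theorem exists_coeff_eq (h : IsFactoredSol q S y ψ) (hy0 : y ≠ 0) (hq : q.Monic)
    (hqn : q.natDegree = k + 1) (hS : S.natDegree ≤ k)
    (hy : ∀ w : ℂ, w ^ (k + 2) = 1 → (fun t : ℝ => y (t * w)) =O[atTop] fun _ => (1 : ℝ)) :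
    ∃ j : ℕ, S.coeff k = -2 * j := by
  obtain ⟨R, hR'⟩ := q.differentiable.isExactOn_univ
  have hR : ∀ z, HasDerivAt R (q.eval z) z := fun z => hR' z (Set.mem_univ z)
  obtain ⟨p, hp⟩ := h.exists_polynomial hq hqn hS hR hy
  have hp0 : p ≠ 0 := by
    rintro rfl
    exact hy0 (funext fun z => by simpa using hp z)
  exact ⟨p.natDegree, coeff_eq_neg_two_mul_natDegree hp0 hq hqn hS
    (h.derivative_derivative_eq_of_mul_exp_eq hR hp)⟩

end IsFactoredSol

end FactoredEquation

section PolySqrt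

open Polynomial

variable {K : Type*} [Field K] {P q q₁ q₂ : K[X]} {n : ℕ}

/-- `q` is the polynomial part of the square root of `P` at infinity, where `P` is monic of degree
`2 * n`. -/
structure IsPolySqrt (n : ℕ) (P q : K[X]) : Prop where
  monic : q.Monic
  natDegree_eq : q.natDegree = n
  degree_sub_sq_lt : (P - q ^ 2).degree < n

theorem IsPolySqrt.unique [NeZero (2 : K)] (h₁ : IsPolySqrt n P q₁) (h₂ : IsPolySqrt n P q₂) :
    q₁ = q₂ := by
  by_contra hne
  have hadd : (n : WithBot ℕ) ≤ (q₁ + q₂).degree := by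
    refine le_degree_of_ne_zero ?_
    rw [coeff_add, ← h₁.natDegree_eq, h₁.monic.coeff_natDegree, h₁.natDegree_eq,
      ← h₂.natDegree_eq, h₂.monic.coeff_natDegree, one_add_one_eq_two]
    exact two_ne_zero
  have hsub : 0 ≤ (q₁ - q₂).degree := zero_le_degree_iff.2 (sub_ne_zero.2 hne)
  have hmul : ((q₁ + q₂) * (q₁ - q₂)).degree < n := by
    rw [show (q₁ + q₂) * (q₁ - q₂) = (P - q₂ ^ 2) - (P - q₁ ^ 2) by ring]
    exact (degree_sub_le _ _).trans_lt (max_lt h₂.degree_sub_sq_lt h₁.degree_sub_sq_lt)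
  rw [degree_mul] at hmul
  exact hmul.not_ge (hadd.trans (le_add_of_nonneg_right hsub))

theorem degree_sub_add_C_mul_X_pow_sq_lt [NeZero (2 : K)] {i : ℕ} (hq : q.Monic)
    (hqn : q.natDegree = n) (hi : i < n) (h : (P - q ^ 2).degree < (n + i + 1 : ℕ)) :
    (P - (q + C ((P - q ^ 2).coeff (n + i) / 2) * X ^ i) ^ 2).degree <
      ((n + i : ℕ) : WithBot ℕ) := by
  set c := (P - q ^ 2).coeff (n + i) / 2 with hc
  have hexpand : P - (q + C c * X ^ i) ^ 2 =
      P - q ^ 2 - C (2 * c) * q * X ^ i - C (c ^ 2) * X ^ (2 * i) := by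
    rw [C_mul, C_pow, show (C 2 : K[X]) = 2 from map_ofNat C 2]
    ring
  rw [degree_lt_iff_coeff_zero] at h ⊢
  intro m hm
  obtain ⟨l, rfl⟩ := Nat.exists_eq_add_of_le' ((Nat.le_add_left i n).trans hm)
  rw [hexpand, coeff_sub, coeff_sub, coeff_mul_X_pow, coeff_C_mul, coeff_C_mul_X_pow,
    if_neg (by omega), sub_zero, sub_eq_zero]
  rcases (by omega : n = l ∨ n < l) with rfl | hl
  · rw [← hqn, hq.coeff_natDegree, hqn, hc, mul_one, mul_div_cancel₀ _ two_ne_zero]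
  · rw [h _ (by omega), coeff_eq_zero_of_natDegree_lt (hqn.trans_lt hl), mul_zero]

/-- The sum of the `j + 1` top monomials of `polySqrt n P`, for `j ≤ n`. Each step cancels the
leading coefficient of the remainder `P - q ^ 2`. -/
noncomputable def polySqrtAux (n : ℕ) (P : K[X]) : ℕ → K[X]
  | 0 => X ^ n
  | j + 1 => polySqrtAux n P j +
      C ((P - polySqrtAux n P j ^ 2).coeff (n + (n - (j + 1))) / 2) * X ^ (n - (j + 1))

/-- The polynomial part of the square root at infinity of a monic polynomial of degree `2 * n`. -/
noncomputable def polySqrt (n : ℕ) (P : K[X]) : K[X] :=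
  polySqrtAux n P n

theorem monic_and_natDegree_polySqrtAux (P : K[X]) {j : ℕ} (hj : j ≤ n) :
    (polySqrtAux n P j).Monic ∧ (polySqrtAux n P j).natDegree = n := by
  induction j with
  | zero => exact ⟨monic_X_pow n, natDegree_X_pow n⟩
  | succ j ih =>
    obtain ⟨hmonic, hdeg⟩ := ih (by omega)
    have hlt : (C ((P - polySqrtAux n P j ^ 2).coeff (n + (n - (j + 1))) / 2) *
        X ^ (n - (j + 1))).degree < (polySqrtAux n P j).degree := by
      rw [degree_eq_natDegree hmonic.ne_zero, hdeg]
      exact (degree_C_mul_X_pow_le _ _).trans_lt (by exact_mod_cast (by omega))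
    exact ⟨hmonic.add_of_left hlt, (natDegree_add_eq_left_of_degree_lt hlt).trans hdeg⟩

theorem degree_sub_polySqrtAux_sq_lt [NeZero (2 : K)] (hP : P.Monic) (hPn : P.natDegree = 2 * n)
    {j : ℕ} (hj : j ≤ n) : (P - polySqrtAux n P j ^ 2).degree < (n + (n - j) : ℕ) := by
  induction j with
  | zero =>
    have hlt := degree_sub_lt_left (p := P) (q := X ^ (2 * n))
      (by rw [degree_X_pow, degree_eq_natDegree hP.ne_zero, hPn]) hP.ne_zero
      (by rw [hP.leadingCoeff, (monic_X_pow _).leadingCoeff])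
    rwa [degree_eq_natDegree hP.ne_zero, hPn, two_mul, pow_add, ← sq] at hlt
  | succ j ih =>
    obtain ⟨hmonic, hdeg⟩ := monic_and_natDegree_polySqrtAux P (n := n) (j := j) (by omega)
    refine degree_sub_add_C_mul_X_pow_sq_lt hmonic hdeg (by omega) ?_
    rw [show n + (n - (j + 1)) + 1 = n + (n - j) by omega]
    exact ih (by omega)

theorem isPolySqrt_polySqrt [NeZero (2 : K)] (hP : P.Monic) (hPn : P.natDegree = 2 * n) :
    IsPolySqrt n P (polySqrt n P) where
  monic := (monic_and_natDegree_polySqrtAux P le_rfl).1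
  natDegree_eq := (monic_and_natDegree_polySqrtAux P le_rfl).2
  degree_sub_sq_lt := by
    simpa [polySqrt] using degree_sub_polySqrtAux_sq_lt hP hPn le_rfl

section Continuity

variable [TopologicalSpace K] [IsTopologicalRing K] {T : Type*} [TopologicalSpace T]
  {f g : T → K[X]}

theorem continuous_coeff_sub_sq (hf : ∀ i, Continuous fun t => (f t).coeff i)
    (hg : ∀ i, Continuous fun t => (g t).coeff i) (i : ℕ) :
    Continuous fun t => (f t - g t ^ 2).coeff i := by
  simp only [coeff_sub, sq, coeff_mul]
  fun_prop

theorem continuous_coeff_polySqrtAux (hf : ∀ i, Continuous fun t => (f t).coeff i) (n j i : ℕ) :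
    Continuous fun t => (polySqrtAux n (f t) j).coeff i := by
  induction j generalizing i with
  | zero => exact continuous_const
  | succ j ih =>
    simp only [polySqrtAux, coeff_add, coeff_C_mul]
    exact (ih i).add (((continuous_coeff_sub_sq hf ih _).div_const 2).mul continuous_const)

theorem continuous_coeff_polySqrt (hf : ∀ i, Continuous fun t => (f t).coeff i) (n i : ℕ) :
    Continuous fun t => (polySqrt n (f t)).coeff i :=
  continuous_coeff_polySqrtAux hf n n i

end Continuity

end PolySqrt

section ResidueAtInfinity

open Asymptotics Polynomial

variable {K : Type*} [Field K] {k : ℕ}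

/-- For `P` monic of degree `2 * (k + 1)`, twice the coefficient of `z⁻¹` in the expansion of the
square root of `P` at infinity. -/
noncomputable def residueAtInfinity (k : ℕ) (P : K[X]) : K :=
  (P - polySqrt (k + 1) P ^ 2).coeff k

theorem continuous_residueAtInfinity [TopologicalSpace K] [IsTopologicalRing K] {T : Type*}
    [TopologicalSpace T] {f : T → K[X]} (hf : ∀ i, Continuous fun t => (f t).coeff i) (k : ℕ) :
    Continuous fun t => residueAtInfinity k (f t) :=
  continuous_coeff_sub_sq hf (continuous_coeff_polySqrt hf (k + 1)) k

theorem residueAtInfinity_X_pow_add_C_mul_X_pow [NeZero (2 : K)] (k : ℕ) (c : K) :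
    residueAtInfinity k (X ^ (2 * (k + 1)) + C c * X ^ k) = c := by
  have hdeg : (C c * X ^ k).degree < ((k + 1 : ℕ) : WithBot ℕ) :=
    (degree_C_mul_X_pow_le k c).trans_lt (by exact_mod_cast k.lt_succ_self)
  have hlt : (C c * X ^ k).degree < ((2 * (k + 1) : ℕ) : WithBot ℕ) :=
    hdeg.trans_le (by exact_mod_cast (by omega))
  have hsub : X ^ (2 * (k + 1)) + C c * X ^ k - (X ^ (k + 1)) ^ 2 = C c * X ^ k := by ring
  have hsqrt : IsPolySqrt (k + 1) (X ^ (2 * (k + 1)) + C c * X ^ k) (X ^ (k + 1)) :=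
    ⟨monic_X_pow _, natDegree_X_pow _, by rwa [hsub]⟩
  have hpoly := isPolySqrt_polySqrt (K := K) (monic_X_pow_add hlt)
    (natDegree_eq_of_degree_eq_some
      ((degree_add_eq_left_of_degree_lt (by rwa [degree_X_pow])).trans (degree_X_pow _)))
  rw [residueAtInfinity, hpoly.unique hsqrt, hsub, coeff_C_mul_X_pow, if_pos rfl]

theorem exists_residueAtInfinity_eq {P : ℂ[X]} {y : ℂ → ℂ} (hP : P.Monic)
    (hPn : P.natDegree = 2 * (k + 1)) (hy0 : y ≠ 0) (hy : Differentiable ℂ y)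
    (hode : ∀ z, deriv (deriv y) z = P.eval z * y z)
    (hbdd : ∀ w : ℂ, w ^ (k + 2) = 1 → (fun t : ℝ => y (t * w)) =O[atTop] fun _ => (1 : ℝ)) :
    ∃ j : ℕ, residueAtInfinity k P = -(k + 1 + 2 * j) := by
  set q := polySqrt (k + 1) P with hqdef
  obtain ⟨hq, hqn, hdeg⟩ : IsPolySqrt (k + 1) P q := isPolySqrt_polySqrt hP hPn
  have hfac : IsFactoredSol q (P - q ^ 2 + derivative q) y _ :=
    .of_hasDerivAt (fun z => (hy z).hasDerivAt) fun z =>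
      (hy.deriv z).hasDerivAt.congr_deriv <| by
        rw [hode, show q ^ 2 - derivative q + (P - q ^ 2 + derivative q) = P by ring]
  have hS : (P - q ^ 2 + derivative q).natDegree ≤ k := by
    refine natDegree_add_le_of_degree_le ?_ ((natDegree_derivative_le q).trans (by omega))
    exact natDegree_le_iff_coeff_eq_zero.2 ((degree_lt_iff_coeff_zero _ _).1 hdeg)
  obtain ⟨j, hj⟩ := hfac.exists_coeff_eq hy0 hq hqn hS hbdd
  have hlead : q.coeff (k + 1) = 1 := hqn ▸ hq.coeff_natDegree
  rw [coeff_add, coeff_derivative, hlead] at hj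
  exact ⟨j, by rw [residueAtInfinity, ← hqdef]; linear_combination hj⟩

end ResidueAtInfinity

section Potential

open Polynomial

/-- The potential `P_α - λ` as a polynomial. -/
noncomputable def potential (d : ℕ) (α : Fin (d - 1) → ℂ) (lam : ℂ) : ℂ[X] :=
  X ^ d + (∑ i : Fin (d - 1), C (α i) * X ^ ((i : ℕ) + 1) - C lam)

theorem eval_potential (d : ℕ) (α : Fin (d - 1) → ℂ) (lam z : ℂ) :
    (potential d α lam).eval z = Pol d α z - lam := by
  simp [potential, Pol, eval_finsetSum, add_sub_assoc]

theorem degree_sum_C_mul_X_pow_sub_C_lt {d : ℕ} (hd : 0 < d) (α : Fin (d - 1) → ℂ) (lam : ℂ) :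
    (∑ i : Fin (d - 1), C (α i) * X ^ ((i : ℕ) + 1) - C lam).degree < d := by
  refine (degree_sub_le _ _).trans_lt (max_lt ?_ (degree_C_le.trans_lt (by exact_mod_cast hd)))
  refine (degree_sum_le _ _).trans_lt ((Finset.sup_lt_iff (WithBot.bot_lt_coe d)).2 fun i _ => ?_)
  exact (degree_C_mul_X_pow_le _ _).trans_lt (Nat.cast_lt.2 (by omega))

theorem monic_potential {d : ℕ} (hd : 0 < d) (α : Fin (d - 1) → ℂ) (lam : ℂ) :
    (potential d α lam).Monic :=
  monic_X_pow_add (degree_sum_C_mul_X_pow_sub_C_lt hd α lam)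

theorem natDegree_potential {d : ℕ} (hd : 0 < d) (α : Fin (d - 1) → ℂ) (lam : ℂ) :
    (potential d α lam).natDegree = d := by
  have hlt := degree_sum_C_mul_X_pow_sub_C_lt hd α lam
  rw [← degree_X_pow (R := ℂ) d] at hlt
  exact (natDegree_add_eq_left_of_degree_lt hlt).trans (natDegree_X_pow d)

theorem continuous_coeff_potential (d m : ℕ) :
    Continuous fun x : (Fin (d - 1) → ℂ) × ℂ => (potential d x.1 x.2).coeff m := by
  simp only [potential, coeff_add, coeff_sub, finsetSum_coeff, coeff_C_mul, coeff_C]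
  split_ifs <;> fun_prop

theorem exists_potential_eq (k : ℕ) (c : ℂ) :
    ∃ (α : Fin (2 * (k + 1) - 1) → ℂ) (lam : ℂ),
      potential (2 * (k + 1)) α lam = X ^ (2 * (k + 1)) + C c * X ^ k := by
  rcases k with _ | k
  · exact ⟨0, -c, by simp [potential]⟩
  · refine ⟨Pi.single ⟨k, by omega⟩ c, 0, ?_⟩
    rw [potential, Fintype.sum_eq_single ⟨k, by omega⟩ fun i hi => by simp [Pi.single_eq_of_ne hi]]
    simp

end Potential

section Subdominant

open Asymptotics

theorem isBigO_one_of_forall_subdominant {m : ℕ} (hm : 0 < m) {y : ℂ → ℂ}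
    (h : ∀ i < m, Subdominant (2 * m) (2 * i) y) {w : ℂ} (hw : w ^ m = 1) :
    (fun t : ℝ => y (t * w)) =O[atTop] fun _ => (1 : ℝ) := by
  have : NeZero m := ⟨hm.ne'⟩
  obtain ⟨i, hi, rfl⟩ := (isPrimitiveRoot_exp m hm.ne').eq_pow_of_pow_eq_one hw
  have hcentre : DirIn (2 * m) (2 * i) (2 * Real.pi * (2 * i : ℕ) / (2 * m : ℕ)) := by
    rw [DirIn, sub_self, abs_zero]
    positivity
  have hdir : exp ((2 * Real.pi * (2 * i : ℕ) / (2 * m : ℕ) : ℝ) * I) =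
      exp (2 * Real.pi * I / m) ^ i := by
    rw [← exp_nat_mul]
    push_cast
    congr 1
    field_simp
  exact hdir ▸ (h i hi _ hcentre).isBigO_one ℝ

theorem exists_re_residueAtInfinity_eq_of_subdominant {k : ℕ} {α : Fin (2 * (k + 1) - 1) → ℂ}
    {lam : ℂ} {y : ℂ → ℂ} (hy0 : y ≠ 0) (hy : IsSol (2 * (k + 1)) α lam y)
    (hsub : ∀ i < k + 2, Subdominant (2 * (k + 2)) (2 * i) y) :
    ∃ j : ℕ, (residueAtInfinity k (potential (2 * (k + 1)) α lam)).re = -(k + 1 + 2 * j) := by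
  obtain ⟨j, hj⟩ := exists_residueAtInfinity_eq (monic_potential (by omega) α lam)
    (natDegree_potential (by omega) α lam) hy0 hy.1 (fun z => by rw [hy.2, eval_potential])
    fun _ => isBigO_one_of_forall_subdominant (by omega) hsub
  exact ⟨j, by simp [hj]⟩

theorem cos_mul_pos_of_dirIn {m i : ℕ} (hm : 0 < m) {θ : ℝ} (h : DirIn (2 * m) (2 * i) θ) :
    0 < Real.cos (m * θ) := by
  have hm' : (0 : ℝ) < m := by exact_mod_cast hm
  have habs : |m * θ - i * (2 * Real.pi)| < Real.pi / 2 := by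
    calc |m * θ - i * (2 * Real.pi)|
        = m * |θ - 2 * Real.pi * (2 * i : ℕ) / (2 * m : ℕ)| := by
          rw [← abs_of_pos hm', ← abs_mul, abs_of_pos hm']
          push_cast
          field_simp
      _ < m * (Real.pi / (2 * m : ℕ)) := by gcongr; exact h
      _ = Real.pi / 2 := by push_cast; field_simp
  rw [← Real.cos_sub_nat_mul_two_pi _ i]
  exact Real.cos_pos_of_mem_Ioo (abs_lt.1 habs)

theorem tendsto_pow_mul_exp_neg_pow_div (j : ℕ) {m : ℕ} (hm : 0 < m) {w : ℂ}
    (hw : 0 < (w ^ m).re) :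
    Tendsto (fun r : ℝ => (r * w) ^ j * exp (-(r * w) ^ m / m)) atTop (𝓝 0) := by
  have hb : 0 < (w ^ m).re / m := div_pos hw (by exact_mod_cast hm)
  have hlim := (tendsto_rpow_mul_exp_neg_mul_atTop_nhds_zero j _ hb).mul_const (‖w‖ ^ j)
  rw [zero_mul] at hlim
  refine squeeze_zero_norm' ?_ hlim
  filter_upwards [eventually_ge_atTop 1] with r hr
  have hre : (-(r * w) ^ m / m).re = -((w ^ m).re / m) * r ^ m := by
    rw [mul_pow, ← ofReal_pow, ← ofReal_natCast, div_ofReal_re, neg_re, re_ofReal_mul]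
    ring
  rw [norm_mul, norm_pow, norm_mul, norm_real, Real.norm_of_nonneg (by positivity), norm_exp, hre,
    Real.rpow_natCast, mul_pow, mul_right_comm]
  have hpow : r ≤ r ^ m := le_self_pow₀ hr hm.ne'
  gcongr _ * Real.exp ?_ * _
  exact mul_le_mul_of_nonpos_left hpow (neg_nonpos.2 hb.le)

theorem subdominant_pow_mul_exp_neg_pow_div (j : ℕ) {m : ℕ} (hm : 0 < m) (i : ℕ) :
    Subdominant (2 * m) (2 * i) fun z => z ^ j * exp (-z ^ m / m) := fun θ hθ => by
  refine tendsto_pow_mul_exp_neg_pow_div j hm ?_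
  rw [← exp_nat_mul, ← mul_assoc, ← ofReal_natCast, ← ofReal_mul, exp_ofReal_mul_I_re]
  exact cos_mul_pos_of_dirIn hm hθ

end Subdominant

section Examples

open Polynomial

theorem hasDerivAt_exp_neg_pow_div (m : ℕ) (z : ℂ) :
    HasDerivAt (fun z : ℂ => exp (-z ^ (m + 1) / (m + 1 : ℕ)))
      (-z ^ m * exp (-z ^ (m + 1) / (m + 1 : ℕ))) z := by
  have hm : ((m + 1 : ℕ) : ℂ) ≠ 0 := Nat.cast_ne_zero.2 m.succ_ne_zero
  refine ((hasDerivAt_pow (m + 1) z).fun_neg.div_const ((m + 1 : ℕ) : ℂ)).cexp.congr_deriv ?_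
  rw [Nat.add_sub_cancel, ← mul_neg, mul_div_cancel_left₀ _ hm, mul_comm]

theorem isFactoredSol_pow_mul {e : ℂ → ℂ} {k j : ℕ} (hj : j < 2)
    (he : ∀ z, HasDerivAt e (-z ^ (k + 1) * e z) z) :
    IsFactoredSol (X ^ (k + 1)) (C (-2 * j : ℂ) * X ^ k) (fun z => z ^ j * e z)
      (fun z => j * e z) where
  hasDerivAt_fst z := by
    have hjz : (j : ℂ) * z ^ (j - 1) = j := by interval_cases j <;> simp
    refine ((hasDerivAt_pow j z).mul (he z)).congr_deriv ?_
    rw [hjz, eval_pow, eval_X]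
    ring
  hasDerivAt_snd z := by
    have hjz : (j : ℂ) * z ^ j = j * z := by interval_cases j <;> simp
    refine ((he z).const_mul (j : ℂ)).congr_deriv ?_
    rw [eval_mul, eval_C, eval_pow, eval_pow, eval_X]
    linear_combination 2 * z ^ k * e z * hjz

theorem isSol_pow_mul {e : ℂ → ℂ} {k j : ℕ} (hj : j < 2)
    (he : ∀ z, HasDerivAt e (-z ^ (k + 1) * e z) z) {α : Fin (2 * (k + 1) - 1) → ℂ} {lam : ℂ}
    (h : potential (2 * (k + 1)) α lam = X ^ (2 * (k + 1)) + C (-(k + 1 + 2 * j) : ℂ) * X ^ k) :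
    IsSol (2 * (k + 1)) α lam fun z => z ^ j * e z := by
  have hfac := isFactoredSol_pow_mul hj he
  refine ⟨fun z => (hfac.hasDerivAt_fst z).differentiableAt, fun z => ?_⟩
  have hpot : (X ^ (k + 1)) ^ 2 - derivative (X ^ (k + 1)) + C (-2 * j : ℂ) * X ^ k =
      potential (2 * (k + 1)) α lam := by
    rw [h, derivative_X_pow, Nat.add_sub_cancel, neg_add, C_add, C_neg, neg_mul, C_neg,
      Nat.cast_add_one]
    ring
  rw [funext fun z => (hfac.hasDerivAt_fst z).deriv, (hfac.hasDerivAt_deriv z).deriv, hpot,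
    eval_potential]

theorem exists_isSol_re_residueAtInfinity_eq (k : ℕ) {j : ℕ} (hj : j < 2) :
    ∃ (α : Fin (2 * (k + 1) - 1) → ℂ) (lam : ℂ) (y : ℂ → ℂ), y ≠ 0 ∧
      IsSol (2 * (k + 1)) α lam y ∧ (∀ i, Subdominant (2 * (k + 2)) (2 * i) y) ∧
      (residueAtInfinity k (potential (2 * (k + 1)) α lam)).re = -(k + 1 + 2 * j) := by
  obtain ⟨α, lam, h⟩ := exists_potential_eq k (-(k + 1 + 2 * j))
  refine ⟨α, lam, _, fun h0 => ?_, isSol_pow_mul hj (hasDerivAt_exp_neg_pow_div _) h,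
    subdominant_pow_mul_exp_neg_pow_div j (by omega), ?_⟩
  · simpa using congrFun h0 1
  · rw [h, residueAtInfinity_X_pow_add_C_mul_X_pow]
    simp

end Examples

theorem stmt4 (d : ℕ) (hd : 2 ≤ d) (hev : Even d) (n : ℕ) (hn : n = d + 2) :
    ¬ IsPreconnected {p : (Fin (d - 1) → ℂ) × ℂ |
      ∃ y : ℂ → ℂ, y ≠ 0 ∧ IsSol d p.1 p.2 y ∧
        ∀ i : ℕ, i < n / 2 → Subdominant n (2 * i) y} := by
  obtain ⟨k, rfl⟩ : ∃ k, d = 2 * (k + 1) := ⟨d / 2 - 1, by grind⟩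
  obtain ⟨rfl, hn2⟩ : n = 2 * (k + 2) ∧ n / 2 = k + 2 := by omega
  rw [hn2]
  intro hpre
  obtain ⟨α₀, lam₀, y₀, hy₀, hsol₀, hsub₀, hres₀⟩ :=
    exists_isSol_re_residueAtInfinity_eq k two_pos
  obtain ⟨α₁, lam₁, y₁, hy₁, hsol₁, hsub₁, hres₁⟩ :=
    exists_isSol_re_residueAtInfinity_eq k one_lt_two
  have hcont : Continuous fun p : (Fin (2 * (k + 1) - 1) → ℂ) × ℂ =>
      (residueAtInfinity k (potential (2 * (k + 1)) p.1 p.2)).re :=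
    continuous_re.comp (continuous_residueAtInfinity (continuous_coeff_potential _) k)
  have hmem : (-(k + 2) : ℝ) ∈ Set.Icc (-(k + 1 + 2 * (1 : ℕ)) : ℝ) (-(k + 1 + 2 * (0 : ℕ))) :=
    ⟨by push_cast; linarith, by push_cast; linarith⟩
  rw [← hres₀, ← hres₁] at hmem
  obtain ⟨⟨α, lam⟩, ⟨y, hy, hsol, hsub⟩, hres⟩ := hpre.intermediate_value
    (a := (α₁, lam₁)) (b := (α₀, lam₀)) ⟨y₁, hy₁, hsol₁, fun i _ => hsub₁ i⟩
    ⟨y₀, hy₀, hsol₀, fun i _ => hsub₀ i⟩ hcont.continuousOn hmem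
  obtain ⟨j, hj⟩ := exists_re_residueAtInfinity_eq_of_subdominant hy hsol hsub
  have hodd : (1 : ℝ) = 2 * j := by linarith [hres, hj]
  have hnat : 1 = 2 * j := by exact_mod_cast hodd
  omega
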